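/- Expression of R as a function of V alone at fixed φ, and concavity: (a) for every (φ, β₁) ∈ D, with V = V(φ, β₁), one has ((3φ − β₁)/(3φ − 1))·V − 1 = (3V² − 1 + 3V·√(V(V−1)))/(3V + 1). (b) The function g defined on (1, ∞) by g(v) = (3v² − 1 + 3v·√(v(v−1)))/(3v + 1) is strictly concave on (1, ∞). -/

import Mathlib

/-- `U(φ, β₁) = 9(1−φ)β₃/(Y β₂)` where `β₂ = 3(1−φ) − 2β₁`, `β₃ = β₁ − 2 + 3φ`,
`Y = 3φ − β₁`. -/
noncomputable def Ufun (φ β₁ : ℝ) : ℝ :=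
  9 * (1 - φ) * (β₁ - 2 + 3 * φ) / ((3 * φ - β₁) * (3 * (1 - φ) - 2 * β₁))

/-- `V(φ, β₁) = 1 + β₂²/(3 Y β₃)`. -/
noncomputable def Vfun (φ β₁ : ℝ) : ℝ :=
  1 + (3 * (1 - φ) - 2 * β₁) ^ 2 / (3 * (3 * φ - β₁) * (β₁ - 2 + 3 * φ))

/-- The constraint polygon `D` for the pair `(φ, β₁)`. -/
def Dset : Set (ℝ × ℝ) :=
  {q | 0.525245 ≤ q.1 ∧ q.1 ≤ 0.619063 ∧ 0.33018 ≤ q.2 ∧ q.2 ≤ 0.52891 ∧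
    0.33018 ≤ 3 * (1 - q.1) - 2 * q.2 ∧ 3 * (1 - q.1) - 2 * q.2 ≤ 0.52891 ∧
    0.077639 ≤ q.2 - 2 + 3 * q.1 ∧ q.2 - 2 + 3 * q.1 ≤ 0.21782}

/-
Put `S = 6φ + β₁ - 3`, `t = β₂ / S` and `R = Y V / (3φ - 1) - 1`. Since `Y = S + β₂`,
`3β₃ = S - β₂` and `3(3φ - 1) = 2S + β₂`, both `V` and `R` are rational in `t`:
`V = 1 / (1 - t²)` and `R + 1 = 3 / ((1 - t)(2 + t))`.
The substitution `v = 1 / (1 - t²)` also rationalises `√(v(v - 1)) = t / (1 - t²)`, which turns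
`g(v) + 1` into the same function of `t`. For the concavity, the chain rule gives
`g'(v) = 3(1 + 2t)(1 + t)² / (2t(2 + t)²)`, a strictly decreasing function of `t ∈ (0, 1]`, while
`t = √(1 - 1/v)` is strictly increasing in `v`.
-/

open Set

/-- The function `g` expressing `R` through `V`. -/
noncomputable def gFun (v : ℝ) : ℝ :=
  (3 * v ^ 2 - 1 + 3 * v * √(v * (v - 1))) / (3 * v + 1)

/-- The parameter `t` with `v = 1 / (1 - t²)`, in which `gFun v` is rational. -/
noncomputable def tFun (v : ℝ) : ℝ :=
  √(1 - v⁻¹)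

/-- The derivative of `gFun` with respect to `v`, written in the parameter `t = tFun v`. -/
noncomputable def gSlope (t : ℝ) : ℝ :=
  3 * (1 + 2 * t) * (1 + t) ^ 2 / (2 * t * (2 + t) ^ 2)

lemma one_sub_tFun_sq {v : ℝ} (hv : 1 ≤ v) : 1 - tFun v ^ 2 = v⁻¹ := by
  rw [tFun, Real.sq_sqrt (sub_nonneg.2 (inv_le_one_of_one_le₀ hv)), sub_sub_cancel]

lemma tFun_lt_one {v : ℝ} (hv : 0 < v) : tFun v < 1 := by
  rw [tFun, Real.sqrt_lt' one_pos, one_pow, sub_lt_self_iff]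
  exact inv_pos.2 hv

lemma tFun_pos {v : ℝ} (hv : 1 < v) : 0 < tFun v :=
  Real.sqrt_pos.2 (sub_pos.2 (inv_lt_one_of_one_lt₀ hv))

lemma strictMonoOn_tFun : StrictMonoOn tFun (Ici 1) := by
  intro v (hv : 1 ≤ v) w _ hvw
  have hinv : w⁻¹ < v⁻¹ := inv_strictAnti₀ (by linarith) hvw
  exact Real.sqrt_lt_sqrt (sub_nonneg.2 (inv_le_one_of_one_le₀ hv)) (by linarith)

lemma hasDerivAt_tFun {v : ℝ} (hv : 1 < v) :
    HasDerivAt tFun ((1 - tFun v ^ 2) ^ 2 / (2 * tFun v)) v := by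
  have hradicand : HasDerivAt (fun w : ℝ ↦ 1 - w⁻¹) ((v ^ 2)⁻¹) v := by
    simpa only [neg_neg] using (hasDerivAt_inv (by linarith : v ≠ 0)).const_sub 1
  rw [one_sub_tFun_sq hv.le, inv_pow]
  exact hradicand.sqrt (sub_pos.2 (inv_lt_one_of_one_lt₀ hv)).ne'

lemma gFun_inv_one_sub_sq {t : ℝ} (ht : 0 ≤ t) (ht' : t < 1) :
    gFun (1 - t ^ 2)⁻¹ = 3 / ((1 - t) * (2 + t)) - 1 := by
  have hfactor : 1 - t ^ 2 = (1 - t) * (1 + t) := by ring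
  have h1 : 0 < 1 - t := sub_pos.2 ht'
  have hpos : 0 < 1 - t ^ 2 := hfactor ▸ by positivity
  have hsqrt : √((1 - t ^ 2)⁻¹ * ((1 - t ^ 2)⁻¹ - 1)) = t / (1 - t ^ 2) := by
    rw [← Real.sqrt_sq (by positivity : 0 ≤ t / (1 - t ^ 2))]
    congr 1
    field_simp
    ring
  have hden : 3 * (1 - t ^ 2)⁻¹ + 1 = (2 - t) * (2 + t) / (1 - t ^ 2) := by
    field_simp
    ring
  have h2 : 0 < 2 - t := by linarith
  rw [gFun, hsqrt, hden, hfactor]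
  field_simp
  ring

lemma gFun_eq_tFun {v : ℝ} (hv : 1 ≤ v) :
    gFun v = 3 / ((1 - tFun v) * (2 + tFun v)) - 1 := by
  have h := gFun_inv_one_sub_sq (Real.sqrt_nonneg _) (tFun_lt_one (zero_lt_one.trans_le hv))
  rwa [← tFun, one_sub_tFun_sq hv, inv_inv] at h

lemma hasDerivAt_gFun {v : ℝ} (hv : 1 < v) : HasDerivAt gFun (gSlope (tFun v)) v := by
  have ht := tFun_pos hv
  have h1 : 0 < 1 - tFun v := sub_pos.2 (tFun_lt_one (zero_lt_one.trans hv))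
  have hden := ((hasDerivAt_tFun hv).const_sub 1).mul ((hasDerivAt_tFun hv).const_add 2)
  have hne : (1 - tFun v) * (2 + tFun v) ≠ 0 := by positivity
  have hquot := ((hasDerivAt_const v (3 : ℝ)).div hden hne).sub_const 1
  have heq : gFun =ᶠ[nhds v] fun w ↦ 3 / ((1 - tFun w) * (2 + tFun w)) - 1 := by
    filter_upwards [Ioi_mem_nhds hv] with w hw using gFun_eq_tFun (le_of_lt hw)
  refine (hquot.congr_of_eventuallyEq heq).congr_deriv ?_
  simp only [gSlope, Pi.mul_apply]
  field_simp
  ring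

lemma strictAntiOn_gSlope : StrictAntiOn gSlope (Ioc 0 1) := by
  rintro a ⟨ha, -⟩ b ⟨hb, hb1⟩ hab
  have hprod : 0 < 1 - a * b :=
    sub_pos.2 (mul_lt_one_of_nonneg_of_lt_one_left ha.le (hab.trans_le hb1) hb1)
  have hdiff : gSlope a - gSlope b =
      3 * (b - a) * (4 * (1 - a * b) * (1 + a + b) + (b - a) ^ 2 + 3 * (a * b) * (1 - a * b)) /
        (2 * (a * (2 + a) ^ 2) * (b * (2 + b) ^ 2)) := by
    simp only [gSlope]
    field_simp
    ring
  have := sub_pos.2 hab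
  rw [← sub_pos, hdiff]
  positivity

lemma continuousOn_gFun : ContinuousOn gFun (Ici 1) := by
  refine ContinuousOn.div (by fun_prop) (by fun_prop) fun v (hv : 1 ≤ v) ↦ ?_
  positivity

lemma strictConcaveOn_gFun : StrictConcaveOn ℝ (Ici 1) gFun := by
  refine StrictAntiOn.strictConcaveOn_of_deriv (convex_Ici 1) continuousOn_gFun ?_
  rw [interior_Ici]
  have hmaps : MapsTo tFun (Ioi 1) (Ioc 0 1) := fun v hv ↦
    ⟨tFun_pos hv, (tFun_lt_one (zero_lt_one.trans hv)).le⟩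
  have hanti : StrictAntiOn (gSlope ∘ tFun) (Ioi 1) :=
    strictAntiOn_gSlope.comp_strictMonoOn (strictMonoOn_tFun.mono Ioi_subset_Ici_self) hmaps
  exact hanti.congr fun v hv ↦ (hasDerivAt_gFun hv).deriv.symm

/-- The ratio `β₂ / S`, where `β₂ = 3(1 - φ) - 2β₁` and `S = 6φ + β₁ - 3`: the parameter
`t` attached to the pair `(φ, β₁)`. -/
noncomputable def tRatio (φ β₁ : ℝ) : ℝ :=
  (3 * (1 - φ) - 2 * β₁) / (6 * φ + β₁ - 3)

section Ratio

variable {φ β₁ : ℝ}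

lemma mul_tRatio (hS : 6 * φ + β₁ - 3 ≠ 0) :
    (6 * φ + β₁ - 3) * tRatio φ β₁ = 3 * (1 - φ) - 2 * β₁ :=
  mul_div_cancel₀ _ hS

lemma tRatio_nonneg (hβ₂ : 0 ≤ 3 * (1 - φ) - 2 * β₁) (hβ₃ : 0 < β₁ - 2 + 3 * φ) :
    0 ≤ tRatio φ β₁ :=
  div_nonneg hβ₂ (by linarith)

lemma tRatio_lt_one (hβ₂ : 0 ≤ 3 * (1 - φ) - 2 * β₁) (hβ₃ : 0 < β₁ - 2 + 3 * φ) :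
    tRatio φ β₁ < 1 :=
  (div_lt_one (by linarith)).2 (by linarith)

lemma Vfun_eq_inv_one_sub_tRatio_sq (hS : 6 * φ + β₁ - 3 ≠ 0) (hY : 3 * φ - β₁ ≠ 0)
    (hβ₃ : β₁ - 2 + 3 * φ ≠ 0) : Vfun φ β₁ = (1 - tRatio φ β₁ ^ 2)⁻¹ := by
  have h : 1 - tRatio φ β₁ ^ 2 =
      3 * (3 * φ - β₁) * (β₁ - 2 + 3 * φ) / (6 * φ + β₁ - 3) ^ 2 := by
    rw [eq_div_iff (pow_ne_zero 2 hS)]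
    linear_combination (-(6 * φ + β₁ - 3) * tRatio φ β₁ - (3 * (1 - φ) - 2 * β₁)) *
      mul_tRatio hS
  rw [h, inv_div, Vfun]
  field_simp
  ring

lemma div_mul_inv_one_sub_tRatio_sq (hS : 6 * φ + β₁ - 3 ≠ 0) (hY : 3 * φ - β₁ ≠ 0) :
    (3 * φ - β₁) / (3 * φ - 1) * (1 - tRatio φ β₁ ^ 2)⁻¹ =
      3 / ((1 - tRatio φ β₁) * (2 + tRatio φ β₁)) := by
  have hY_eq : 3 * φ - β₁ = (6 * φ + β₁ - 3) * (1 + tRatio φ β₁) := by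
    linear_combination -mul_tRatio hS
  have hφ_eq : 3 * φ - 1 = (6 * φ + β₁ - 3) * (2 + tRatio φ β₁) / 3 := by
    linear_combination -(1 / 3) * mul_tRatio hS
  have ht : 1 + tRatio φ β₁ ≠ 0 := right_ne_zero_of_mul (hY_eq ▸ hY)
  have hfactor : 1 - tRatio φ β₁ ^ 2 = (1 - tRatio φ β₁) * (1 + tRatio φ β₁) := by ring
  rw [hY_eq, hφ_eq, hfactor]
  field_simp

end Ratio

theorem R_as_function_of_V_fixed_phi_and_concavity_general :
    (∀ φ β₁ : ℝ, 0 ≤ 3 * (1 - φ) - 2 * β₁ → 0 < β₁ - 2 + 3 * φ →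
        (3 * φ - β₁) / (3 * φ - 1) * Vfun φ β₁ - 1 = gFun (Vfun φ β₁)) ∧
      StrictConcaveOn ℝ (Ici 1) gFun := by
  refine ⟨fun φ β₁ hβ₂ hβ₃ ↦ ?_, strictConcaveOn_gFun⟩
  have hS : 6 * φ + β₁ - 3 ≠ 0 := by linarith
  have hY : 3 * φ - β₁ ≠ 0 := by linarith
  rw [Vfun_eq_inv_one_sub_tRatio_sq hS hY hβ₃.ne', div_mul_inv_one_sub_tRatio_sq hS hY,
    gFun_inv_one_sub_sq (tRatio_nonneg hβ₂ hβ₃) (tRatio_lt_one hβ₂ hβ₃)]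

/-- (a) for `(φ, β₁) ∈ D` with `V = V(φ, β₁)`,
`((3φ − β₁)/(3φ − 1))·V − 1 = (3V² − 1 + 3V√(V(V−1)))/(3V + 1)`;
(b) `g(v) = (3v² − 1 + 3v√(v(v−1)))/(3v + 1)` is strictly concave on `(1, ∞)`. -/
theorem R_as_function_of_V_fixed_phi_and_concavity :
    (∀ φ β₁ : ℝ, (φ, β₁) ∈ Dset →
        (3 * φ - β₁) / (3 * φ - 1) * Vfun φ β₁ - 1 =
          (3 * (Vfun φ β₁) ^ 2 - 1 +
              3 * Vfun φ β₁ * Real.sqrt (Vfun φ β₁ * (Vfun φ β₁ - 1))) /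
            (3 * Vfun φ β₁ + 1)) ∧
      StrictConcaveOn ℝ (Set.Ioi 1)
        (fun v : ℝ => (3 * v ^ 2 - 1 + 3 * v * Real.sqrt (v * (v - 1))) / (3 * v + 1)) := by
  obtain ⟨hR, hg⟩ := R_as_function_of_V_fixed_phi_and_concavity_general
  refine ⟨fun φ β₁ ⟨_, _, _, _, hβ₂, _, hβ₃, _⟩ ↦ ?_, hg.subset Ioi_subset_Ici_self (convex_Ioi 1)⟩
  exact hR φ β₁ (le_trans (by norm_num) hβ₂) (lt_of_lt_of_le (by norm_num) hβ₃)
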